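/- Let I ⊂ ℝ be an interval and let p, a, b : I → ℂ be C¹ functions with |p(t)| < 1 for all t ∈ I that solve the reduced resonant system of the four-dimensional Schrödinger–Newton–Hooke equation. Then the four quantities N(t) = (1+y)²(2(1+y)(1+3y)|a|² + |b|² + 4(1+y)·Re(conj(a)·b·p)), J(t) = (1+y)²(2(1+y)(1+9y+12y²)|a|² + 2y|b|² + 4(1+y)(1+3y)·Re(conj(a)·b·p)), S(t) = |a|²(1+y)⁴/2, and Z(t) = 2(1+y)³(6(1+y)(1+2y)|a|² + |b|² + 6(1+y)·Re(conj(a)·b·p))·conj(p) + 2(1+y)³·conj(a)·b, where y = |p|²/(1−|p|²), are all constant on I (N, J, S are real constants and Z is a complex constant). -/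

import Mathlib

open Set

/-- `y = |p|²/(1-|p|²)`. -/
noncomputable def yv (p : ℝ → ℂ) (t : ℝ) : ℝ := ‖p t‖^2 / (1 - ‖p t‖^2)

/-- `y` as a complex number. -/
noncomputable def Yc (p : ℝ → ℂ) (t : ℝ) : ℂ := ((yv p t : ℝ) : ℂ)

/-- `(p, a, b)` (with derivatives `(pd, ad, bd)`) is a `C¹` solution on `I` of the
reduced resonant system of the four-dimensional Schrödinger–Newton–Hooke equation. -/
def RRS (I : Set ℝ) (p a b pd ad bd : ℝ → ℂ) : Prop :=
  (∀ t ∈ I, HasDerivAt p (pd t) t) ∧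
  (∀ t ∈ I, HasDerivAt a (ad t) t) ∧
  (∀ t ∈ I, HasDerivAt b (bd t) t) ∧
  ContinuousOn pd I ∧ ContinuousOn ad I ∧ ContinuousOn bd I ∧
  (∀ t ∈ I,
    Complex.I * pd t =
      (1/16) * (1 + Yc p t)^2 *
        (2 * ((‖a t‖^2 : ℝ) : ℂ) * p t * (1 + Yc p t) + a t * starRingEnd ℂ (b t)) ∧
    Complex.I * ad t =
      (1/16) * a t * (1 + Yc p t)^3 *
        (10 * ((‖a t‖^2 : ℝ) : ℂ) * (1 + 3 * Yc p t)
          + 20 * (((a t * starRingEnd ℂ (b t) * starRingEnd ℂ (p t)).re : ℝ) : ℂ)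
          + 4 * starRingEnd ℂ (a t) * b t * p t)
        + (7/16) * a t * (1 + Yc p t)^2 * ((‖b t‖^2 : ℝ) : ℂ) ∧
    Complex.I * bd t =
      (3/8) * a t * starRingEnd ℂ (p t) * (1 + Yc p t)^4 *
        (2 * (1 + 2 * Yc p t) * ((‖a t‖^2 : ℝ) : ℂ)
          + a t * starRingEnd ℂ (b t) * starRingEnd ℂ (p t))
        + b t * (1 + Yc p t)^2 *
          ((1 + Yc p t) * (1 + 3 * Yc p t) * ((‖a t‖^2 : ℝ) : ℂ)
            + ((‖b t‖^2 : ℝ) : ℂ) / 2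
            + 2 * (1 + Yc p t) * (((starRingEnd ℂ (a t) * b t * p t).re : ℝ) : ℂ)))

/-- The mass `N`. -/
noncomputable def Nval (p a b : ℝ → ℂ) (t : ℝ) : ℝ :=
  (1 + yv p t)^2 * (2 * (1 + yv p t) * (1 + 3 * yv p t) * ‖a t‖^2 + ‖b t‖^2
    + 4 * (1 + yv p t) * (starRingEnd ℂ (a t) * b t * p t).re)

/-- The linear energy `J`. -/
noncomputable def Jval (p a b : ℝ → ℂ) (t : ℝ) : ℝ :=
  (1 + yv p t)^2 * (2 * (1 + yv p t) * (1 + 9 * yv p t + 12 * (yv p t)^2) * ‖a t‖^2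
    + 2 * yv p t * ‖b t‖^2
    + 4 * (1 + yv p t) * (1 + 3 * yv p t) * (starRingEnd ℂ (a t) * b t * p t).re)

/-- The quantity `S = |a|²(1+y)⁴/2` encoding the Hamiltonian via `H = N² - 6S²`. -/
noncomputable def Sval (p a : ℝ → ℂ) (t : ℝ) : ℝ := ‖a t‖^2 * (1 + yv p t)^4 / 2

/-- The complex integral of motion `Z`, special to `d = 4`. -/
noncomputable def Zval (p a b : ℝ → ℂ) (t : ℝ) : ℂ :=
  2 * (((1 + yv p t : ℝ)) : ℂ)^3 *
      (((6 * (1 + yv p t) * (1 + 2 * yv p t) * ‖a t‖^2 + ‖b t‖^2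
        + 6 * (1 + yv p t) * (starRingEnd ℂ (a t) * b t * p t).re : ℝ)) : ℂ) *
      starRingEnd ℂ (p t)
    + 2 * (((1 + yv p t : ℝ)) : ℂ)^3 * starRingEnd ℂ (a t) * b t

/-!
Write `A = |a|²`, `B = |b|²`, `w = ā b p`. Along a solution the time derivatives of `y`, `A`, `B`
and `Re w` are all real multiples of `Im w`. Eliminating time in favour of `y` leaves the linear
system
`dA/dy = -4A/(1+y)`, `dB/dy = 12((1+2y)A + Re w)`,
`d(Re w)/dy = -(4(1+y)(2+3y)A + B + 12(1+y) Re w)/(2(1+y)²)`,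
of which `N`, `J`, `S` are three first integrals, linear in `(A, B, Re w)`. Moreover
`Z = (2N + J + 12S) p̄ + 2(1+y)³ ā b`, so that the conservation of `Z` says that `2(1+y)³ ā b`
follows `p̄` with the constant velocity ratio `-(2N + J + 12S)`.
-/

open scoped ComplexConjugate

theorem eq_of_hasDerivWithinAt_zero {𝕜 E : Type*} [RCLike 𝕜] [NormedAddCommGroup E]
    [NormedSpace 𝕜 E] {s : Set 𝕜} (hs : Convex ℝ s) {f : 𝕜 → E}
    (hf : ∀ x ∈ s, HasDerivWithinAt f 0 s x) {x y : 𝕜} (hx : x ∈ s) (hy : y ∈ s) :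
    f x = f y := by
  have h := hs.norm_image_sub_le_of_norm_hasDerivWithin_le (C := 0) hf
    (fun _ _ => norm_zero.le) hy hx
  rwa [zero_mul, norm_le_zero_iff, sub_eq_zero] at h

theorem hasDerivAt_norm_sq_of_I_mul {f : ℝ → ℂ} {f' F : ℂ} {t : ℝ} (hf : HasDerivAt f f' t)
    (hF : Complex.I * f' = F) :
    HasDerivAt (fun s => ‖f s‖ ^ 2) (2 * (conj (f t) * F).im) t := by
  refine hf.norm_sq.congr_deriv ?_
  rw [Complex.inner, ← hF, mul_left_comm, Complex.I_mul_im, mul_comm f']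

theorem hasDerivAt_conj_mul_of_I_mul {f g : ℝ → ℂ} {f' g' F G : ℂ} {t : ℝ}
    (hf : HasDerivAt f f' t) (hg : HasDerivAt g g' t)
    (hF : Complex.I * f' = F) (hG : Complex.I * g' = G) :
    HasDerivAt (fun s => conj (f s) * g s)
      (-Complex.I * (conj (f t) * G - conj F * g t)) t := by
  refine (hf.star.mul hg).congr_deriv ?_
  simp only [← hF, ← hG, map_mul, Complex.conj_I, ← starRingEnd_apply]
  linear_combination (conj (f t) * g' + conj f' * g t) * Complex.I_sq

theorem one_sub_norm_sq_ne_zero {E : Type*} [SeminormedAddCommGroup E] {x : E} (hx : ‖x‖ ≠ 1) :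
    1 - ‖x‖ ^ 2 ≠ 0 :=
  sub_ne_zero.2 <| Ne.symm <|
    (pow_eq_one_iff_of_nonneg (norm_nonneg x) two_ne_zero).not.2 hx

theorem one_add_yv {p : ℝ → ℂ} {t : ℝ} (hp : ‖p t‖ ≠ 1) :
    1 + yv p t = (1 - ‖p t‖ ^ 2)⁻¹ := by
  have := one_sub_norm_sq_ne_zero hp
  rw [yv]
  field_simp
  ring

theorem one_add_yv_mul_conj_mul_self {p : ℝ → ℂ} {t : ℝ} (hp : ‖p t‖ ≠ 1) :
    (1 + (yv p t : ℂ)) * (conj (p t) * p t) = yv p t := by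
  have h : (1 + yv p t) * ‖p t‖ ^ 2 = yv p t := by
    rw [one_add_yv hp, yv, inv_mul_eq_div]
  rw [Complex.conj_mul']
  exact_mod_cast h

/-- The interference term `w = ā b p`: its real part is, up to a factor depending on `n` and `|p|`
only, the cross term in `|α_n|² = (n+1) |b + (a/p) n|² |p|²ⁿ`. -/
noncomputable def interference (p a b : ℝ → ℂ) (t : ℝ) : ℂ := conj (a t) * b t * p t

theorem ofReal_interference_re (p a b : ℝ → ℂ) (t : ℝ) :
    ((interference p a b t).re : ℂ) =
      (conj (a t) * b t * p t + a t * conj (b t) * conj (p t)) / 2 := by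
  simp only [interference, Complex.re_eq_add_conj, map_mul, Complex.conj_conj]

theorem ofReal_interference_im (p a b : ℝ → ℂ) (t : ℝ) :
    ((interference p a b t).im : ℂ) =
      -Complex.I * (conj (a t) * b t * p t - a t * conj (b t) * conj (p t)) / 2 := by
  simp only [interference, Complex.im_eq_sub_conj, map_mul, Complex.conj_conj]
  field_simp
  rw [Complex.I_sq]
  ring

theorem two_mul_Nval_add_Jval_add_twelve_mul_Sval (p a b : ℝ → ℂ) (t : ℝ) :
    2 * Nval p a b t + Jval p a b t + 12 * Sval p a t =
      2 * (1 + yv p t) ^ 3 * (6 * (1 + yv p t) * (1 + 2 * yv p t) * ‖a t‖ ^ 2 + ‖b t‖ ^ 2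
        + 6 * (1 + yv p t) * (interference p a b t).re) := by
  rw [Nval, Jval, Sval, interference]
  ring

theorem Zval_eq_add (p a b : ℝ → ℂ) (t : ℝ) :
    Zval p a b t =
      ((2 * Nval p a b t + Jval p a b t + 12 * Sval p a t : ℝ) : ℂ) * conj (p t)
        + 2 * (1 + yv p t) ^ 3 * (conj (a t) * b t) := by
  rw [Zval, two_mul_Nval_add_Jval_add_twelve_mul_Sval, interference]
  push_cast
  ring

namespace RRS

variable {I : Set ℝ} {p a b pd ad bd : ℝ → ℂ} {t : ℝ}

theorem pd_eq (h : RRS I p a b pd ad bd) (ht : t ∈ I) :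
    pd t = -Complex.I / 16 * (1 + yv p t) ^ 2 *
      (2 * ‖a t‖ ^ 2 * p t * (1 + yv p t) + a t * conj (b t)) := by
  have hpd := (h.2.2.2.2.2.2 t ht).1
  rw [Yc, Complex.ofReal_pow] at hpd
  linear_combination -Complex.I * hpd + pd t * Complex.I_sq

theorem hasDerivAt_norm_sq_p (h : RRS I p a b pd ad bd) (ht : t ∈ I) :
    HasDerivAt (fun s => ‖p s‖ ^ 2)
      (-(1 / 8) * (1 + yv p t) ^ 2 * (interference p a b t).im) t := by
  obtain ⟨hpd, -, -, -, -, -, heq⟩ := h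
  refine (hasDerivAt_norm_sq_of_I_mul (hpd t ht) (heq t ht).1).congr_deriv ?_
  have hsplit : conj (p t) * ((1 / 16) * (1 + Yc p t) ^ 2 *
      (2 * ((‖a t‖ ^ 2 : ℝ) : ℂ) * p t * (1 + Yc p t) + a t * conj (b t))) =
      ((1 / 8 * (1 + yv p t) ^ 3 * ‖a t‖ ^ 2 * ‖p t‖ ^ 2 : ℝ) : ℂ)
        + ((1 / 16 * (1 + yv p t) ^ 2 : ℝ) : ℂ) * conj (interference p a b t) := by
    simp only [Yc, interference, map_mul, Complex.conj_conj]
    push_cast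
    rw [← Complex.mul_conj' (p t)]
    ring
  rw [hsplit, Complex.add_im, Complex.ofReal_im, Complex.im_ofReal_mul, Complex.conj_im]
  ring

theorem hasDerivAt_yv (h : RRS I p a b pd ad bd) (ht : t ∈ I) (hp : ‖p t‖ ≠ 1) :
    HasDerivAt (yv p) (-(1 / 8) * (1 + yv p t) ^ 4 * (interference p a b t).im) t := by
  have hr := h.hasDerivAt_norm_sq_p ht
  have hne := one_sub_norm_sq_ne_zero hp
  refine (hr.div (hr.const_sub 1) hne).congr_deriv ?_
  rw [one_add_yv hp]
  field_simp
  ring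

theorem hasDerivAt_norm_sq_a (h : RRS I p a b pd ad bd) (ht : t ∈ I) :
    HasDerivAt (fun s => ‖a s‖ ^ 2)
      (1 / 2 * (1 + yv p t) ^ 3 * ‖a t‖ ^ 2 * (interference p a b t).im) t := by
  obtain ⟨-, had, -, -, -, -, heq⟩ := h
  refine (hasDerivAt_norm_sq_of_I_mul (had t ht) (heq t ht).2.1).congr_deriv ?_
  have hsplit : conj (a t) * ((1 / 16) * a t * (1 + Yc p t) ^ 3 *
        (10 * ((‖a t‖ ^ 2 : ℝ) : ℂ) * (1 + 3 * Yc p t)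
          + 20 * (((a t * conj (b t) * conj (p t)).re : ℝ) : ℂ) + 4 * conj (a t) * b t * p t)
        + (7 / 16) * a t * (1 + Yc p t) ^ 2 * ((‖b t‖ ^ 2 : ℝ) : ℂ)) =
      ((1 / 16 * ‖a t‖ ^ 2 * (1 + yv p t) ^ 3 *
          (10 * ‖a t‖ ^ 2 * (1 + 3 * yv p t) + 20 * (a t * conj (b t) * conj (p t)).re)
        + 7 / 16 * ‖a t‖ ^ 2 * (1 + yv p t) ^ 2 * ‖b t‖ ^ 2 : ℝ) : ℂ)
      + ((1 / 4 * (1 + yv p t) ^ 3 * ‖a t‖ ^ 2 : ℝ) : ℂ) * interference p a b t := by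
    simp only [Yc, interference]
    push_cast
    rw [← Complex.conj_mul' (a t)]
    ring
  rw [hsplit, Complex.add_im, Complex.ofReal_im, Complex.im_ofReal_mul]
  ring

theorem hasDerivAt_norm_sq_b (h : RRS I p a b pd ad bd) (ht : t ∈ I) :
    HasDerivAt (fun s => ‖b s‖ ^ 2)
      (-(3 / 2) * (1 + yv p t) ^ 4 *
        ((1 + 2 * yv p t) * ‖a t‖ ^ 2 + (interference p a b t).re) *
        (interference p a b t).im) t := by
  obtain ⟨-, -, hbd, -, -, -, heq⟩ := h
  refine (hasDerivAt_norm_sq_of_I_mul (hbd t ht) (heq t ht).2.2).congr_deriv ?_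
  have hsplit : conj (b t) * ((3 / 8) * a t * conj (p t) * (1 + Yc p t) ^ 4 *
        (2 * (1 + 2 * Yc p t) * ((‖a t‖ ^ 2 : ℝ) : ℂ) + a t * conj (b t) * conj (p t))
        + b t * (1 + Yc p t) ^ 2 *
          ((1 + Yc p t) * (1 + 3 * Yc p t) * ((‖a t‖ ^ 2 : ℝ) : ℂ) + ((‖b t‖ ^ 2 : ℝ) : ℂ) / 2
            + 2 * (1 + Yc p t) * (((conj (a t) * b t * p t).re : ℝ) : ℂ))) =
      ((‖b t‖ ^ 2 * (1 + yv p t) ^ 2 *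
          ((1 + yv p t) * (1 + 3 * yv p t) * ‖a t‖ ^ 2 + ‖b t‖ ^ 2 / 2
            + 2 * (1 + yv p t) * (conj (a t) * b t * p t).re) : ℝ) : ℂ)
      + ((3 / 8 * (1 + yv p t) ^ 4 : ℝ) : ℂ) *
        (((2 * (1 + 2 * yv p t) * ‖a t‖ ^ 2 : ℝ) : ℂ) * conj (interference p a b t)
          + conj (interference p a b t) * conj (interference p a b t)) := by
    simp only [Yc, interference, map_mul, Complex.conj_conj]
    push_cast
    rw [← Complex.conj_mul' (b t)]
    ring
  rw [hsplit, Complex.add_im, Complex.ofReal_im, Complex.im_ofReal_mul, Complex.add_im,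
    Complex.im_ofReal_mul, Complex.mul_im, Complex.conj_re, Complex.conj_im]
  ring

theorem hasDerivAt_conj_a_mul_b (h : RRS I p a b pd ad bd) (ht : t ∈ I) :
    HasDerivAt (fun s => conj (a s) * b s)
      (-Complex.I / 16 * (1 + yv p t) ^ 2 *
        (conj (a t) * b t * (6 * (1 + yv p t) * (1 + 3 * yv p t) * ‖a t‖ ^ 2 + ‖b t‖ ^ 2
            + 12 * (1 + yv p t) * (interference p a b t).re
            - 4 * (1 + yv p t) * conj (interference p a b t))
          + 6 * ‖a t‖ ^ 2 * conj (p t) * (1 + yv p t) ^ 2 *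
            (2 * (1 + 2 * yv p t) * ‖a t‖ ^ 2 + conj (interference p a b t)))) t := by
  obtain ⟨-, had, hbd, -, -, -, heq⟩ := h
  refine (hasDerivAt_conj_mul_of_I_mul (had t ht) (hbd t ht) (heq t ht).2.1
    (heq t ht).2.2).congr_deriv ?_
  simp only [Yc, interference, Complex.re_eq_add_conj, map_add, map_mul, map_div₀, map_pow,
    map_one, map_ofNat, Complex.conj_ofReal, Complex.conj_conj]
  push_cast
  rw [← Complex.conj_mul' (a t)]
  ring

theorem hasDerivAt_interference (h : RRS I p a b pd ad bd) (ht : t ∈ I) (hp : ‖p t‖ ≠ 1) :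
    HasDerivAt (interference p a b)
      (-Complex.I * (((1 / 16 * (1 + yv p t) ^ 2 : ℝ) : ℂ) *
        (((‖a t‖ ^ 2 * ‖b t‖ ^ 2 - 4 * (1 + yv p t) * ‖interference p a b t‖ ^ 2
            + 12 * (1 + yv p t) * yv p t * (1 + 2 * yv p t) * (‖a t‖ ^ 2) ^ 2 : ℝ) : ℂ)
          + ((2 * (1 + yv p t) * (4 + 9 * yv p t) * ‖a t‖ ^ 2 + ‖b t‖ ^ 2
            + 12 * (1 + yv p t) * (interference p a b t).re : ℝ) : ℂ) * interference p a b t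
          + ((6 * (1 + yv p t) * yv p t * ‖a t‖ ^ 2 : ℝ) : ℂ) *
            conj (interference p a b t)))) t := by
  refine ((h.hasDerivAt_conj_a_mul_b ht).mul (h.1 t ht)).congr_deriv ?_
  rw [h.pd_eq ht]
  push_cast
  simp only [← Complex.conj_mul', ofReal_interference_re]
  simp only [interference, map_mul, Complex.conj_conj]
  linear_combination (-Complex.I / 16 * (1 + yv p t : ℂ) ^ 2 * (6 * (conj (a t) * a t)
    * (1 + yv p t) * (2 * (1 + 2 * yv p t) * (conj (a t) * a t)
      + a t * conj (b t) * conj (p t)))) * one_add_yv_mul_conj_mul_self hp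

theorem hasDerivAt_interference_re (h : RRS I p a b pd ad bd) (ht : t ∈ I) (hp : ‖p t‖ ≠ 1) :
    HasDerivAt (fun s => (interference p a b s).re)
      (1 / 16 * (1 + yv p t) ^ 2 *
        (4 * (1 + yv p t) * (2 + 3 * yv p t) * ‖a t‖ ^ 2 + ‖b t‖ ^ 2
          + 12 * (1 + yv p t) * (interference p a b t).re) *
        (interference p a b t).im) t := by
  refine (Complex.reCLM.hasFDerivAt.comp_hasDerivAt t
    (h.hasDerivAt_interference ht hp)).congr_deriv ?_
  rw [Complex.reCLM_apply, neg_mul, Complex.neg_re, Complex.I_mul_re, neg_neg,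
    Complex.im_ofReal_mul, Complex.add_im, Complex.add_im, Complex.ofReal_im,
    Complex.im_ofReal_mul, Complex.im_ofReal_mul, Complex.conj_im]
  ring

theorem hasDerivAt_Nval (h : RRS I p a b pd ad bd) (ht : t ∈ I) (hp : ‖p t‖ ≠ 1) :
    HasDerivAt (Nval p a b) 0 t := by
  have hy := h.hasDerivAt_yv ht hp
  have hu := hy.const_add 1
  have hA := ((hu.const_mul 2).fun_mul ((hy.const_mul 3).const_add 1)).fun_mul
    (h.hasDerivAt_norm_sq_a ht)
  have hB := h.hasDerivAt_norm_sq_b ht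
  have hR := (hu.const_mul 4).fun_mul (h.hasDerivAt_interference_re ht hp)
  refine ((hu.fun_pow 2).fun_mul ((hA.fun_add hB).fun_add hR)).congr_deriv ?_
  ring

theorem hasDerivAt_Jval (h : RRS I p a b pd ad bd) (ht : t ∈ I) (hp : ‖p t‖ ≠ 1) :
    HasDerivAt (Jval p a b) 0 t := by
  have hy := h.hasDerivAt_yv ht hp
  have hu := hy.const_add 1
  have hA := ((hu.const_mul 2).fun_mul (((hy.const_mul 9).const_add 1).fun_add
    ((hy.fun_pow 2).const_mul 12))).fun_mul (h.hasDerivAt_norm_sq_a ht)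
  have hB := (hy.const_mul 2).fun_mul (h.hasDerivAt_norm_sq_b ht)
  have hR := ((hu.const_mul 4).fun_mul ((hy.const_mul 3).const_add 1)).fun_mul
    (h.hasDerivAt_interference_re ht hp)
  refine ((hu.fun_pow 2).fun_mul ((hA.fun_add hB).fun_add hR)).congr_deriv ?_
  ring

theorem hasDerivAt_Sval (h : RRS I p a b pd ad bd) (ht : t ∈ I) (hp : ‖p t‖ ≠ 1) :
    HasDerivAt (Sval p a) 0 t := by
  have hA := h.hasDerivAt_norm_sq_a ht
  have hu := (h.hasDerivAt_yv ht hp).const_add 1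
  refine ((hA.fun_mul (hu.fun_pow 4)).div_const 2).congr_deriv ?_
  ring

theorem hasDerivAt_one_add_yv_cube_mul_conj_a_mul_b (h : RRS I p a b pd ad bd) (ht : t ∈ I)
    (hp : ‖p t‖ ≠ 1) :
    HasDerivAt (fun s => 2 * (1 + (yv p s : ℂ)) ^ 3 * (conj (a s) * b s))
      (-((2 * Nval p a b t + Jval p a b t + 12 * Sval p a t : ℝ) : ℂ) * conj (pd t)) t := by
  have hu := (h.hasDerivAt_yv ht hp).ofReal_comp.const_add 1
  refine (((hu.fun_pow 3).const_mul 2).fun_mul (h.hasDerivAt_conj_a_mul_b ht)).congr_deriv ?_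
  rw [two_mul_Nval_add_Jval_add_twelve_mul_Sval, h.pd_eq ht]
  push_cast
  rw [ofReal_interference_im, ofReal_interference_re]
  simp only [← Complex.conj_mul', interference, map_mul, map_add, map_neg, map_div₀, map_pow,
    map_one, map_ofNat, Complex.conj_I, Complex.conj_ofReal, Complex.conj_conj]
  linear_combination (3 / 4 * Complex.I * (1 + yv p t : ℂ) ^ 6 * (conj (a t) * a t)
    * (conj (a t) * b t)) * one_add_yv_mul_conj_mul_self hp

theorem hasDerivAt_Zval (h : RRS I p a b pd ad bd) (ht : t ∈ I) (hp : ‖p t‖ ≠ 1) :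
    HasDerivAt (Zval p a b) 0 t := by
  have hK := ((((h.hasDerivAt_Nval ht hp).const_mul 2).fun_add (h.hasDerivAt_Jval ht hp)).fun_add
    ((h.hasDerivAt_Sval ht hp).const_mul 12)).ofReal_comp
  have hX := h.hasDerivAt_one_add_yv_cube_mul_conj_a_mul_b ht hp
  rw [funext (Zval_eq_add p a b)]
  refine ((hK.fun_mul (h.1 t ht).star).fun_add hX).congr_deriv ?_
  simp only [mul_zero, add_zero, Complex.ofReal_zero, zero_mul, zero_add, starRingEnd_apply]
  ring

end RRS

theorem stmt18_general (I : Set ℝ) (hI : I.OrdConnected) (p a b pd ad bd : ℝ → ℂ)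
    (hp : ∀ t ∈ I, ‖p t‖ ≠ 1) (h : RRS I p a b pd ad bd) :
    ∀ t₁ ∈ I, ∀ t₂ ∈ I,
      Nval p a b t₁ = Nval p a b t₂ ∧
      Jval p a b t₁ = Jval p a b t₂ ∧
      Sval p a t₁ = Sval p a t₂ ∧
      Zval p a b t₁ = Zval p a b t₂ := by
  intro t₁ h₁ t₂ h₂
  have hN t (ht : t ∈ I) := (h.hasDerivAt_Nval ht (hp t ht)).hasDerivWithinAt (s := I)
  have hJ t (ht : t ∈ I) := (h.hasDerivAt_Jval ht (hp t ht)).hasDerivWithinAt (s := I)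
  have hS t (ht : t ∈ I) := (h.hasDerivAt_Sval ht (hp t ht)).hasDerivWithinAt (s := I)
  have hZ t (ht : t ∈ I) := (h.hasDerivAt_Zval ht (hp t ht)).hasDerivWithinAt (s := I)
  exact ⟨eq_of_hasDerivWithinAt_zero hI.convex hN h₁ h₂,
    eq_of_hasDerivWithinAt_zero hI.convex hJ h₁ h₂,
    eq_of_hasDerivWithinAt_zero hI.convex hS h₁ h₂,
    eq_of_hasDerivWithinAt_zero hI.convex hZ h₁ h₂⟩

/-- The quantities `N`, `J`, `S`, `Z` are conserved along solutions of the reduced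
resonant system of the four-dimensional Schrödinger–Newton–Hooke equation. -/
theorem stmt18 (I : Set ℝ) (hI : I.OrdConnected)
    (p a b pd ad bd : ℝ → ℂ)
    (hp1 : ∀ t ∈ I, ‖p t‖ < 1)
    (hsys : RRS I p a b pd ad bd) :
    ∀ t₁ ∈ I, ∀ t₂ ∈ I,
      Nval p a b t₁ = Nval p a b t₂ ∧
      Jval p a b t₁ = Jval p a b t₂ ∧
      Sval p a t₁ = Sval p a t₂ ∧
      Zval p a b t₁ = Zval p a b t₂ :=
  stmt18_general I hI p a b pd ad bd (fun t ht => (hp1 t ht).ne) hsys
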